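/- Let C be the dual-pivot quickselect cost array defined from the 'Count' partitioning costs P^ct by the standard recurrence. Then for every n ≥ 4, the average number of comparisons to select the second smallest element satisfies C(n,2) = C(n,n−1) = (9/4)·n + (1/12)·∑_{k=1}^{n−1} H_k/(n−k) − (1/6)·∑_{k=2}^n H^alt_{k−1}/k − (8/9)·H_n − (1/9)·H^alt_n − 755/216 − (1/12)·∑_{k=1}^{n−1} 1/(k(n−k)) + (1/6)·H^alt_{n−1}/n − ( 1/(144(n−3)) if n is even ) − ( 1/(144(n−2)) if n is odd ) + ( 5/(144(n−1)) if n is even ) + ( 7/(3n) if n is even ) + ( 325/(144·n) if n is odd ). -/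

import Mathlib

open Finset

/-- Harmonic numbers `H_n = ∑_{k=1}^n 1/k`. -/
noncomputable def H (n : ℕ) : ℝ := ∑ k ∈ Finset.Icc 1 n, (1 : ℝ) / k

/-- Alternating harmonic numbers `H^alt_n = ∑_{k=1}^n (-1)^k/k`. -/
noncomputable def Halt (n : ℕ) : ℝ := ∑ k ∈ Finset.Icc 1 n, (-1 : ℝ) ^ k / k

/-- The dual-pivot quickselect cost array defined from expected partitioning
costs `P` by the standard recurrence:  `C(n,j) = 0` whenever `n ≤ 1` or `j < 1`
or `j > n`; and for `n ≥ 2` and `1 ≤ j ≤ n`,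
`C(n,j) = P(n) + (2/(n(n−1)))·( ∑_{s=j}^{n−2} (n−1−s)·C(s,j)
  + ∑_{m=1}^{n−2} ∑_{s=max(0,j−m−1)}^{min(j−2, n−m−2)} C(m, j−s−1)
  + ∑_{ℓ=n−j+1}^{n−2} (n−1−ℓ)·C(ℓ, n−j+1) )`.
(The `attach` is only needed for the termination proof.) -/
noncomputable def qsCost (P : ℕ → ℝ) : ℕ → ℤ → ℝ
  | n, j =>
    if n ≤ 1 ∨ j < 1 ∨ (n : ℤ) < j then 0
    else
      P n + 2 / ((n : ℝ) * ((n : ℝ) - 1)) *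
        ((∑ s ∈ (Finset.Icc j.toNat (n - 2)).attach,
            ((n : ℝ) - 1 - (s : ℕ)) * qsCost P (s : ℕ) j) +
         (∑ m ∈ (Finset.Icc 1 (n - 2)).attach,
            ∑ s ∈ Finset.Icc (max 0 (j - ((m : ℕ) : ℤ) - 1))
                (min (j - 2) ((n : ℤ) - ((m : ℕ) : ℤ) - 2)),
              qsCost P (m : ℕ) (j - s - 1)) +
         (∑ l ∈ (Finset.Icc ((n : ℤ) - j + 1).toNat (n - 2)).attach,
            ((n : ℝ) - 1 - (l : ℕ)) * qsCost P (l : ℕ) ((n : ℤ) - j + 1)))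
  termination_by n j => n
  decreasing_by
    · have hs := s.2; simp only [Finset.mem_Icc] at hs; omega
    · have hm := m.2; simp only [Finset.mem_Icc] at hm; omega
    · have hl := l.2; simp only [Finset.mem_Icc] at hl; omega

/-- Generating function of the expected partitioning costs of the strategy
"Count". -/
noncomputable def countGF (z : ℝ) : ℝ :=
  3 / (2 * (1 - z) ^ 2) + (Real.log ((1 + z) / (1 - z)) / 2) / (2 * (1 - z))
  - 31 * z ^ 2 / (8 * (1 - z)) - ((3 + z) / 8) * (Real.log ((1 + z) / (1 - z)) / 2)
  - 3 / 2 - 25 * z / 8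


/-! ### Coefficients of the generating function -/

/-- `a` is the coefficient sequence of `f` on the unit interval. -/
def IsGF (a : ℕ → ℝ) (f : ℝ → ℝ) : Prop :=
  ∀ z : ℝ, |z| < 1 → HasSum (fun n : ℕ => a n * z ^ n) (f z)

/-- Coefficient shift. -/
def shiftSeq (a : ℕ → ℝ) : ℕ → ℝ
  | 0 => 0
  | n + 1 => a n

lemma IsGF.shift {a : ℕ → ℝ} {f : ℝ → ℝ} (h : IsGF a f) :
    IsGF (shiftSeq a) (fun z => z * f z) := by
  intro z hz
  have h1 := (h z hz).mul_left z
  rw [← hasSum_nat_add_iff' 1]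
  simp only [Finset.sum_range_one, shiftSeq, zero_mul, sub_zero]
  refine h1.congr_fun ?_ |> id
  intro n; ring

lemma IsGF.add {a b : ℕ → ℝ} {f g : ℝ → ℝ} (h : IsGF a f) (h' : IsGF b g) :
    IsGF (fun n => a n + b n) (fun z => f z + g z) := by
  intro z hz
  have := (h z hz).add (h' z hz)
  simpa only [add_mul] using this

lemma IsGF.smul {a : ℕ → ℝ} {f : ℝ → ℝ} (c : ℝ) (h : IsGF a f) :
    IsGF (fun n => c * a n) (fun z => c * f z) := by
  intro z hz
  have := (h z hz).mul_left c
  simpa only [mul_assoc] using this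

lemma IsGF.unique {a b : ℕ → ℝ} {f : ℝ → ℝ} (ha : IsGF a f) (hb : IsGF b f) : a = b := by
  have key : ∀ a : ℕ → ℝ, IsGF a f →
      HasFPowerSeriesAt f (FormalMultilinearSeries.ofScalars ℝ a) 0 := by
    intro a ha
    rw [hasFPowerSeriesAt_iff]
    filter_upwards [Metric.ball_mem_nhds (0:ℝ) one_pos] with z hz
    have := ha z (by simpa using hz)
    simpa [FormalMultilinearSeries.coeff_ofScalars, mul_comm] using this
  have h := (key a ha).eq_formalMultilinearSeries (key b hb)
  funext n
  have := congrArg (fun p => FormalMultilinearSeries.coeff p n) h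
  simpa [FormalMultilinearSeries.coeff_ofScalars] using this

/-- Coefficients of artanh. -/
noncomputable def tc (n : ℕ) : ℝ := (1 - (-1) ^ n) / (2 * n)

lemma isGF_artanh : IsGF tc (fun z => Real.log ((1 + z) / (1 - z)) / 2) := by
  intro z hz
  have hz' := abs_lt.mp hz
  have h1 := Real.hasSum_pow_div_log_of_abs_lt_one hz
  have h2 := Real.hasSum_pow_div_log_of_abs_lt_one (x := -z) (by simpa using hz)
  have h3 := (h1.sub h2).mul_left (1/2)
  rw [← hasSum_nat_add_iff' 1]
  simp only
  rw [Real.log_div (by linarith) (by linarith)]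
  have e1 : (fun n : ℕ => tc (n + 1) * z ^ (n + 1))
      = fun i : ℕ => 1 / 2 * (z ^ (i + 1) / ((i : ℝ) + 1) - (-z) ^ (i + 1) / ((i : ℝ) + 1)) := by
    funext n
    have : (n:ℝ) + 1 ≠ 0 := by positivity
    simp only [tc]
    push_cast
    rw [neg_pow z]
    field_simp
  have e2 : (Real.log (1 + z) - Real.log (1 - z)) / 2 - ∑ i ∈ Finset.range 1, tc i * z ^ i
      = 1 / 2 * (-Real.log (1 - z) - -Real.log (1 - -z)) := by
    simp [tc]; ring
  rw [e1, e2]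
  exact h3

lemma isGF_geom : IsGF (fun _ => 1) (fun z => (1 - z)⁻¹) := by
  intro z hz
  simpa using hasSum_geometric_of_abs_lt_one hz

/-- Coefficients of the constant one. -/
def oneSeq : ℕ → ℝ
  | 0 => 1
  | _ + 1 => 0

lemma isGF_one : IsGF oneSeq (fun _ => 1) := by
  intro z hz
  have := hasSum_single (f := fun n : ℕ => oneSeq n * z ^ n) 0 (by
    intro n hn
    obtain ⟨m, rfl⟩ := Nat.exists_eq_succ_of_ne_zero hn
    simp [oneSeq])
  simpa [oneSeq] using this

lemma count_diff (P : ℕ → ℝ) (hP : IsGF P countGF) :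
    (fun n => P n + (-1) * shiftSeq P n) = fun n =>
      3 / 2 * 1 + 1 / 8 * tc n + 1 / 4 * shiftSeq tc n + 1 / 8 * shiftSeq (shiftSeq tc) n
      + (-3 / 2) * oneSeq n + (-13 / 8) * shiftSeq oneSeq n
      + (-3 / 4) * shiftSeq (shiftSeq oneSeq) n := by
  refine IsGF.unique (hP.add (hP.shift.smul (-1))) ?_
  have h := (((((((isGF_geom.smul (3/2)).add (isGF_artanh.smul (1/8))).add
    (isGF_artanh.shift.smul (1/4))).add (isGF_artanh.shift.shift.smul (1/8))).add
    (isGF_one.smul (-3/2))).add (isGF_one.shift.smul (-13/8))).add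
    (isGF_one.shift.shift.smul (-3/4)))
  intro z hz
  have h' := h z hz
  have hz' : (1 - z) ≠ 0 := by have := abs_lt.mp hz; linarith
  convert h' using 1
  simp only [countGF]
  field_simp
  ring

lemma H_succ (n : ℕ) : H (n + 1) = H n + 1 / ((n : ℝ) + 1) := by
  simp [H, Finset.sum_Icc_succ_top]

lemma Halt_succ (n : ℕ) : Halt (n + 1) = Halt n + (-1) ^ (n + 1) / ((n : ℝ) + 1) := by
  simp [Halt, Finset.sum_Icc_succ_top]

lemma H_zero : H 0 = 0 := by simp [H]
lemma Halt_zero : Halt 0 = 0 := by simp [Halt]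

lemma count_formula (P : ℕ → ℝ) (hP : IsGF P countGF) (k : ℕ) :
    P (k + 2) = 3 / 2 * ((k : ℝ) + 3) + (H (k + 2) - Halt (k + 2)) / 4 - 31 / 8
      - 3 / 8 * tc (k + 2) - 1 / 8 * tc (k + 1) := by
  have hd := fun n => congrFun (count_diff P hP) n
  induction k with
  | zero =>
    have h0 := hd 0
    have h1 := hd 1
    have h2 := hd 2
    simp [shiftSeq, oneSeq, tc] at h0 h1 h2
    simp [H_succ, Halt_succ, H_zero, Halt_zero, tc]
    norm_num at *
    linarith
  | succ k ih =>
    have h := hd (k + 3)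
    simp only [shiftSeq, oneSeq] at h
    have e : k + 1 + 2 = k + 3 := rfl
    rw [e, H_succ (k+2), Halt_succ (k+2)]
    have e2 : (1 / (((k+2:ℕ):ℝ) + 1) - (-1) ^ (k + 2 + 1) / (((k+2:ℕ):ℝ) + 1)) = 2 * tc (k + 3) := by
      have : (k:ℝ) + 3 ≠ 0 := by positivity
      have : (k:ℝ) + 2 + 1 ≠ 0 := by positivity
      simp only [tc]; push_cast; field_simp; ring
    push_cast at *
    have e3 : k + 1 + 1 = k + 2 := rfl
    rw [e3]
    linarith

/-! ### The recurrence -/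

lemma qsCost_eq (P : ℕ → ℝ) (n : ℕ) (j : ℤ) (hn : 2 ≤ n) (hj : 1 ≤ j) (hj' : j ≤ n) :
    qsCost P n j = P n + 2 / ((n : ℝ) * ((n : ℝ) - 1)) *
        ((∑ s ∈ Finset.Icc j.toNat (n - 2), ((n : ℝ) - 1 - s) * qsCost P s j) +
         (∑ m ∈ Finset.Icc 1 (n - 2),
            ∑ s ∈ Finset.Icc (max 0 (j - (m : ℤ) - 1)) (min (j - 2) ((n : ℤ) - (m : ℤ) - 2)),
              qsCost P m (j - s - 1)) +
         (∑ l ∈ Finset.Icc ((n : ℤ) - j + 1).toNat (n - 2),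
            ((n : ℝ) - 1 - l) * qsCost P l ((n : ℤ) - j + 1))) := by
  rw [qsCost, if_neg (by omega)]
  rw [Finset.sum_attach (Finset.Icc j.toNat (n - 2)) (fun s => ((n : ℝ) - 1 - s) * qsCost P s j),
    Finset.sum_attach (Finset.Icc 1 (n - 2)) (fun m =>
      ∑ s ∈ Finset.Icc (max 0 (j - (m : ℤ) - 1)) (min (j - 2) ((n : ℤ) - (m : ℤ) - 2)),
              qsCost P m (j - s - 1)),
    Finset.sum_attach (Finset.Icc ((n : ℤ) - j + 1).toNat (n - 2)) (fun l =>
            ((n : ℝ) - 1 - l) * qsCost P l ((n : ℤ) - j + 1))]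

lemma qsCost_zero (P : ℕ → ℝ) (n : ℕ) (j : ℤ) (h : n ≤ 1 ∨ j < 1 ∨ (n : ℤ) < j) :
    qsCost P n j = 0 := by
  rw [qsCost, if_pos h]

lemma qs_one (P : ℕ → ℝ) (n : ℕ) (hn : 2 ≤ n) :
    qsCost P n 1 = P n + 2 / ((n : ℝ) * ((n : ℝ) - 1)) *
      ∑ s ∈ Finset.Icc 1 (n - 2), ((n : ℝ) - 1 - s) * qsCost P s 1 := by
  rw [qsCost_eq P n 1 hn le_rfl (by omega)]
  congr 2
  have h1 : ∀ m : ℕ, Finset.Icc (max 0 ((1:ℤ) - (m : ℤ) - 1)) (min ((1:ℤ) - 2) ((n : ℤ) - (m : ℤ) - 2)) = ∅ := by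
    intro m; apply Finset.Icc_eq_empty; omega
  have h2 : Finset.Icc ((n : ℤ) - 1 + 1).toNat (n - 2) = ∅ := by
    apply Finset.Icc_eq_empty; omega
  simp only [h1, h2]
  simp

lemma qs_last (P : ℕ → ℝ) (n : ℕ) : qsCost P n n = qsCost P n 1 := by
  by_cases hn : n ≤ 1
  · rw [qsCost_zero P n n (Or.inl hn), qsCost_zero P n 1 (Or.inl hn)]
  · rw [qs_one P n (by omega), qsCost_eq P n n (by omega) (by omega) le_rfl]
    congr 2
    have h1 : ∀ m ∈ Finset.Icc 1 (n - 2), ∑ s ∈ Finset.Icc (max 0 ((n:ℤ) - (m : ℤ) - 1)) (min ((n:ℤ) - 2) ((n : ℤ) - (m : ℤ) - 2)), qsCost P m ((n:ℤ) - s - 1) = 0 := by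
      intro m hm; rw [Finset.Icc_eq_empty, Finset.sum_empty]; omega
    have h2 : Finset.Icc (n : ℤ).toNat (n - 2) = ∅ := by
      apply Finset.Icc_eq_empty; omega
    rw [Finset.sum_eq_zero h1, h2]
    simp

lemma qs_two (P : ℕ → ℝ) (n : ℕ) (hn : 2 ≤ n) :
    qsCost P n 2 = P n + 2 / ((n : ℝ) * ((n : ℝ) - 1)) *
      (∑ s ∈ Finset.Icc 2 (n - 2), ((n : ℝ) - 1 - s) * qsCost P s 2
        + ∑ m ∈ Finset.Icc 1 (n - 2), qsCost P m 1) := by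
  rw [qsCost_eq P n 2 hn (by norm_num) (by omega)]
  congr 2
  have h1 : ∀ m ∈ Finset.Icc 1 (n - 2), ∑ s ∈ Finset.Icc (max 0 ((2:ℤ) - (m : ℤ) - 1)) (min ((2:ℤ) - 2) ((n : ℤ) - (m : ℤ) - 2)), qsCost P m ((2:ℤ) - s - 1) = qsCost P m 1 := by
    intro m hm
    rw [Finset.mem_Icc] at hm
    rw [show max 0 ((2:ℤ) - (m : ℤ) - 1) = 0 by omega,
      show (min ((2:ℤ) - 2) ((n : ℤ) - (m : ℤ) - 2)) = 0 by omega]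
    simp
  have h2 : Finset.Icc ((n : ℤ) - 2 + 1).toNat (n - 2) = ∅ := by
    apply Finset.Icc_eq_empty; omega
  rw [Finset.sum_congr rfl h1, h2]
  simp

lemma qs_symm (P : ℕ → ℝ) (n : ℕ) (hn : 4 ≤ n) :
    qsCost P n ((n : ℤ) - 1) = qsCost P n 2 := by
  rw [qs_two P n (by omega), qsCost_eq P n _ (by omega) (by omega) (by omega)]
  congr 2
  have h1 : ∀ m ∈ Finset.Icc 1 (n - 2), ∑ s ∈ Finset.Icc (max 0 ((n:ℤ) - 1 - (m : ℤ) - 1)) (min ((n:ℤ) - 1 - 2) ((n : ℤ) - (m : ℤ) - 2)), qsCost P m ((n:ℤ) - 1 - s - 1) = qsCost P m 1 := by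
    intro m hm
    rw [Finset.mem_Icc] at hm
    rw [show max 0 ((n:ℤ) - 1 - (m : ℤ) - 1) = n - m - 2 by omega,
      show (min ((n:ℤ) - 1 - 2) ((n : ℤ) - (m : ℤ) - 2)) = n - m - 2 by omega]
    rw [Finset.Icc_self, Finset.sum_singleton, ← qs_last P m]
    congr 1; ring
  have h2 : Finset.Icc ((n : ℤ) - 1).toNat (n - 2) = ∅ := by
    apply Finset.Icc_eq_empty; omega
  rw [Finset.sum_congr rfl h1, h2, show (n : ℤ) - (n - 1) + 1 = 2 by ring]
  simp [add_comm]

/-- Normal form of the recurrence over ranges. -/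
lemma rec_diff (P X Y : ℕ → ℝ)
    (h : ∀ n : ℕ, 2 ≤ n → (n : ℝ) * (n - 1) / 2 * (X n - P n)
      = ∑ s ∈ Finset.range (n - 1), ((n : ℝ) - 1 - s) * X s + ∑ s ∈ Finset.range (n - 1), Y s)
    (k : ℕ) :
    ((k : ℝ) + 4) * (k + 3) / 2 * (X (k + 4) - P (k + 4))
      - ((k : ℝ) + 3) * (k + 2) * (X (k + 3) - P (k + 3))
      + ((k : ℝ) + 2) * (k + 1) / 2 * (X (k + 2) - P (k + 2))
      = X (k + 2) + Y (k + 2) - Y (k + 1) := by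
  have h0 := h (k + 2) (by omega)
  have h1 := h (k + 3) (by omega)
  have h2 := h (k + 4) (by omega)
  simp only [show k + 2 - 1 = k + 1 by omega, show k + 3 - 1 = k + 1 + 1 by omega,
    show k + 4 - 1 = k + 1 + 1 + 1 by omega] at h0 h1 h2
  have e : ∀ (c : ℝ) (m : ℕ), ∑ s ∈ Finset.range m, (c - s) * X s
      = c * ∑ s ∈ Finset.range m, X s - ∑ s ∈ Finset.range m, s * X s := by
    intro c m
    rw [Finset.mul_sum, ← Finset.sum_sub_distrib]
    exact Finset.sum_congr rfl fun _ _ => by ring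
  rw [e] at h0 h1 h2
  simp only [Finset.sum_range_succ] at h0 h1 h2
  push_cast at *
  linear_combination h2 - 2 * h1 + h0

lemma rec_one (P : ℕ → ℝ) (n : ℕ) (hn : 2 ≤ n) :
    (n : ℝ) * (n - 1) / 2 * (qsCost P n 1 - P n)
      = ∑ s ∈ Finset.range (n - 1), ((n : ℝ) - 1 - s) * qsCost P s 1
        + ∑ s ∈ Finset.range (n - 1), (fun _ => (0 : ℝ)) s := by
  have hn' : (2 : ℝ) ≤ n := by exact_mod_cast hn
  have hs : ∑ s ∈ Finset.range (n - 1), ((n : ℝ) - 1 - s) * qsCost P s 1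
      = ∑ s ∈ Finset.Icc 1 (n - 2), ((n : ℝ) - 1 - s) * qsCost P s 1 := by
    symm
    apply Finset.sum_subset
    · intro s; simp only [Finset.mem_Icc, Finset.mem_range]; omega
    · intro s hs hs'
      simp only [Finset.mem_Icc, Finset.mem_range] at hs hs'
      rw [qsCost_zero P s 1 (by omega), mul_zero]
  rw [hs, qs_one P n hn]
  have : (n : ℝ) - 1 ≠ 0 := by linarith
  have : (n : ℝ) ≠ 0 := by linarith
  simp only [Finset.sum_const_zero]
  field_simp
  ring

lemma rec_two (P : ℕ → ℝ) (n : ℕ) (hn : 2 ≤ n) :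
    (n : ℝ) * (n - 1) / 2 * (qsCost P n 2 - P n)
      = ∑ s ∈ Finset.range (n - 1), ((n : ℝ) - 1 - s) * qsCost P s 2
        + ∑ s ∈ Finset.range (n - 1), qsCost P s 1 := by
  have hn' : (2 : ℝ) ≤ n := by exact_mod_cast hn
  have hs : ∑ s ∈ Finset.range (n - 1), ((n : ℝ) - 1 - s) * qsCost P s 2
      = ∑ s ∈ Finset.Icc 2 (n - 2), ((n : ℝ) - 1 - s) * qsCost P s 2 := by
    symm
    apply Finset.sum_subset
    · intro s; simp only [Finset.mem_Icc, Finset.mem_range]; omega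
    · intro s hs hs'
      simp only [Finset.mem_Icc, Finset.mem_range] at hs hs'
      rw [qsCost_zero P s 2 (by omega), mul_zero]
  have hs2 : ∑ s ∈ Finset.range (n - 1), qsCost P s 1
      = ∑ s ∈ Finset.Icc 1 (n - 2), qsCost P s 1 := by
    symm
    apply Finset.sum_subset
    · intro s; simp only [Finset.mem_Icc, Finset.mem_range]; omega
    · intro s hs hs'
      simp only [Finset.mem_Icc, Finset.mem_range] at hs hs'
      rw [qsCost_zero P s 1 (by omega)]
  rw [hs, hs2, qs_two P n hn]
  have : (n : ℝ) - 1 ≠ 0 := by linarith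
  have : (n : ℝ) ≠ 0 := by linarith
  field_simp
  ring

/-! ### Auxiliary sums -/

lemma S_eq (n : ℕ) : ∑ i ∈ Finset.range n, 1 / (((i : ℝ) + 1) * ((n : ℝ) - i))
    = 2 * H n / ((n : ℝ) + 1) := by
  have hH : ∑ i ∈ Finset.range n, 1 / ((i : ℝ) + 1) = H n := by
    induction n with
    | zero => simp [H_zero]
    | succ n ih => rw [Finset.sum_range_succ, ih, H_succ]
  have hH' : ∑ i ∈ Finset.range n, 1 / ((n : ℝ) - i) = H n := by
    rw [← hH, ← Finset.sum_range_reflect]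
    apply Finset.sum_congr rfl
    intro i hi
    rw [Finset.mem_range] at hi
    rw [show n - 1 - i = n - (i + 1) by omega, Nat.cast_sub (by omega)]
    push_cast
    congr 1; ring
  rw [two_mul, add_div]
  nth_rewrite 1 [← hH]
  rw [← hH', Finset.sum_div, Finset.sum_div, ← Finset.sum_add_distrib]
  apply Finset.sum_congr rfl
  intro i hi
  rw [Finset.mem_range] at hi
  have : (n : ℝ) - i ≠ 0 := by
    have : (i : ℝ) < n := by exact_mod_cast hi
    linarith
  have : (i : ℝ) + 1 ≠ 0 := by positivity
  have : (n : ℝ) + 1 ≠ 0 := by positivity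
  field_simp
  ring

lemma S_eq' (n : ℕ) : ∑ k ∈ Finset.Icc 1 n, 1 / ((k : ℝ) * (((n + 1 : ℕ) : ℝ) - (k : ℝ)))
    = 2 * H n / ((n : ℝ) + 1) := by
  rw [← S_eq, Finset.range_eq_Ico]
  refine Eq.trans ?_ ((Finset.sum_Ico_add' (fun k : ℕ => 1 / ((k : ℝ) * (((n + 1 : ℕ) : ℝ) - (k : ℝ)))) 0 n 1).symm.trans ?_)
  rotate_left
  · apply Finset.sum_congr rfl
    intro i _
    push_cast
    congr 2; ring
  · apply Finset.sum_congr _ fun _ _ => rfl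
    ext; simp only [Finset.mem_Icc, Finset.mem_Ico]; omega

/-- The convolution sum. -/
noncomputable def As (n : ℕ) : ℝ := ∑ k ∈ Finset.range n, H k / ((n : ℝ) - k)

lemma As_succ (n : ℕ) : As (n + 1) = As n + 2 * H n / ((n : ℝ) + 1) := by
  rw [← S_eq, As, Finset.sum_range_succ', H_zero, zero_div, add_zero, As,
    ← Finset.sum_add_distrib]
  apply Finset.sum_congr rfl
  intro i hi
  rw [Finset.mem_range] at hi
  have : (n : ℝ) - i ≠ 0 := by
    have : (i : ℝ) < n := by exact_mod_cast hi
    linarith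
  have : (i : ℝ) + 1 ≠ 0 := by positivity
  rw [H_succ]
  push_cast
  rw [show (n : ℝ) + 1 - (i + 1) = n - i by ring]
  field_simp

lemma As_eq (n : ℕ) : ∑ k ∈ Finset.Icc 1 (n - 1), H k / ((n : ℝ) - (k : ℝ)) = As n := by
  apply Finset.sum_subset
  · intro s; simp only [Finset.mem_Icc, Finset.mem_range]; omega
  · intro s hs hs'
    simp only [Finset.mem_Icc, Finset.mem_range] at hs hs'
    rw [show s = 0 by omega, H_zero, zero_div]

/-- The alternating double sum. -/
noncomputable def Bs (n : ℕ) : ℝ := ∑ k ∈ Finset.Icc 2 n, Halt (k - 1) / (k : ℝ)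

lemma Bs_succ (n : ℕ) (hn : 1 ≤ n) : Bs (n + 1) = Bs n + Halt n / ((n : ℝ) + 1) := by
  rw [Bs, Finset.sum_Icc_succ_top (by omega), Bs]
  simp

/-! ### Closed forms -/

/-- Closed form for the smallest element. -/
noncomputable def Dcl (n : ℕ) : ℝ :=
  9 / 4 * (n : ℝ) + 1 / 12 * As n - 1 / 6 * Bs n - 43 / 18 * H n + 1 / 18 * Halt n + 5 / 108
  + (if Even n then - 1 / (36 * ((n : ℝ) - 1)) else 1 / (72 * (n : ℝ)) + 1 / (72 * ((n : ℝ) - 2)))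

/-- Closed form for the second smallest element. -/
noncomputable def Fcl (n : ℕ) : ℝ :=
  9 / 4 * (n : ℝ) + 1 / 12 * As n - 1 / 6 * Bs n - 8 / 9 * H n - 1 / 9 * Halt n - 755 / 216
  - 1 / 12 * (2 * H (n - 1) / (n : ℝ)) + 1 / 6 * Halt (n - 1) / (n : ℝ)
  + (if Even n then - 1 / (144 * ((n : ℝ) - 3)) + 5 / (144 * ((n : ℝ) - 1)) + 7 / (3 * (n : ℝ))
      else - 1 / (144 * ((n : ℝ) - 2)) + 325 / (144 * (n : ℝ)))

/-- Closed form of the partitioning costs. -/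
noncomputable def Pcl (n : ℕ) : ℝ :=
  3 / 2 * ((n : ℝ) + 1) + (H n - Halt n) / 4 - 31 / 8
  - (if Even n then 1 / (8 * ((n : ℝ) - 1)) else 3 / (8 * (n : ℝ)))

lemma count_Pcl (P : ℕ → ℝ) (hP : IsGF P countGF) (n : ℕ) (hn : 2 ≤ n) : P n = Pcl n := by
  obtain ⟨k, rfl⟩ := Nat.exists_eq_add_of_le' hn
  rw [count_formula P hP k, Pcl, tc, tc]
  have : (k : ℝ) + 1 ≠ 0 := by positivity
  have : (k : ℝ) + 2 ≠ 0 := by positivity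
  rcases Nat.even_or_odd k with h | h
  · have h2 : Even (k + 2) := by grind
    have h1 : Odd (k + 1) := by grind
    rw [if_pos h2, h2.neg_one_pow, h1.neg_one_pow]
    push_cast
    rw [show (k : ℝ) + 2 - 1 = k + 1 by ring]
    field_simp
    ring
  · have h2 : Odd (k + 2) := by grind
    have h1 : Even (k + 1) := by grind
    rw [if_neg (by grind), h2.neg_one_pow, h1.neg_one_pow]
    push_cast
    field_simp
    ring

lemma Dcl_step (j : ℕ) :
    ((j : ℝ) + 5) * (j + 4) / 2 * (Dcl (j + 5) - Pcl (j + 5))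
      - ((j : ℝ) + 4) * (j + 3) * (Dcl (j + 4) - Pcl (j + 4))
      + ((j : ℝ) + 3) * (j + 2) / 2 * (Dcl (j + 3) - Pcl (j + 3))
      = Dcl (j + 3) := by
  have a5 := As_succ (j + 4)
  have a4 := As_succ (j + 3)
  have b5 := Bs_succ (j + 4) (by omega)
  have b4 := Bs_succ (j + 3) (by omega)
  have h5 := H_succ (j + 4)
  have h4 := H_succ (j + 3)
  have g5 := Halt_succ (j + 4)
  have g4 := Halt_succ (j + 3)
  simp only [Nat.add_assoc, Nat.reduceAdd] at a5 a4 b5 b4 h5 h4 g5 g4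
  simp only [Dcl, Pcl]
  rw [a5, a4, b5, b4, h5, h4, g5, g4]
  generalize As (j + 3) = A
  generalize Bs (j + 3) = B
  generalize H (j + 3) = h
  generalize Halt (j + 3) = g
  push_cast
  rcases Nat.even_or_odd j with hj | hj
  · have e5 : ¬ Even (j + 5) := by grind
    have e4 : Even (j + 4) := by grind
    have e3 : ¬ Even (j + 3) := by grind
    rw [if_neg e5, if_pos e4, if_neg e3, if_neg e5, if_pos e4, if_neg e3,
      (Nat.not_even_iff_odd.mp e5).neg_one_pow, e4.neg_one_pow]
    rw [show (j : ℝ) + 4 - 1 = j + 3 by ring, show (j : ℝ) + 3 - 2 = j + 1 by ring,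
      show (j : ℝ) + 5 - 2 = j + 3 by ring, show (j : ℝ) + 4 + 1 = j + 5 by ring,
      show (j : ℝ) + 3 + 1 = j + 4 by ring]
    field_simp
    ring
  · have e5 : Even (j + 5) := by grind
    have e4 : ¬ Even (j + 4) := by grind
    have e3 : Even (j + 3) := by grind
    rw [if_pos e5, if_neg e4, if_pos e3, if_pos e5, if_neg e4, if_pos e3,
      (Nat.not_even_iff_odd.mp e4).neg_one_pow, e5.neg_one_pow]
    rw [show (j : ℝ) + 5 - 1 = j + 4 by ring, show (j : ℝ) + 4 - 2 = j + 2 by ring,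
      show (j : ℝ) + 3 - 1 = j + 2 by ring, show (j : ℝ) + 4 + 1 = j + 5 by ring,
      show (j : ℝ) + 3 + 1 = j + 4 by ring]
    field_simp
    ring

lemma Fcl_step (j : ℕ) :
    ((j : ℝ) + 6) * (j + 5) / 2 * (Fcl (j + 6) - Pcl (j + 6))
      - ((j : ℝ) + 5) * (j + 4) * (Fcl (j + 5) - Pcl (j + 5))
      + ((j : ℝ) + 4) * (j + 3) / 2 * (Fcl (j + 4) - Pcl (j + 4))
      = Fcl (j + 4) + Dcl (j + 4) - Dcl (j + 3) := by
  have a6 := As_succ (j + 5)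
  have a5 := As_succ (j + 4)
  have a4 := As_succ (j + 3)
  have b6 := Bs_succ (j + 5) (by omega)
  have b5 := Bs_succ (j + 4) (by omega)
  have b4 := Bs_succ (j + 3) (by omega)
  have h6 := H_succ (j + 5)
  have h5 := H_succ (j + 4)
  have h4 := H_succ (j + 3)
  have g6 := Halt_succ (j + 5)
  have g5 := Halt_succ (j + 4)
  have g4 := Halt_succ (j + 3)
  simp only [Nat.add_assoc, Nat.reduceAdd] at a6 a5 a4 b6 b5 b4 h6 h5 h4 g6 g5 g4
  simp only [Dcl, Pcl, Fcl, show j + 6 - 1 = j + 5 by omega, show j + 5 - 1 = j + 4 by omega,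
    show j + 4 - 1 = j + 3 by omega]
  rw [a6, a5, a4, b6, b5, b4, h6, h5, h4, g6, g5, g4]
  generalize As (j + 3) = A
  generalize Bs (j + 3) = B
  generalize H (j + 3) = h
  generalize Halt (j + 3) = g
  push_cast
  rcases Nat.even_or_odd j with hj | hj
  · have e6 : Even (j + 6) := by grind
    have e5 : ¬ Even (j + 5) := by grind
    have e4 : Even (j + 4) := by grind
    have e3 : ¬ Even (j + 3) := by grind
    simp only [if_pos e6, if_neg e5, if_pos e4, if_neg e3,
      (Nat.not_even_iff_odd.mp e5).neg_one_pow, e4.neg_one_pow, e6.neg_one_pow]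
    rw [show (j : ℝ) + 4 - 1 = j + 3 by ring, show (j : ℝ) + 3 - 2 = j + 1 by ring,
      show (j : ℝ) + 6 - 1 = j + 5 by ring, show (j : ℝ) + 6 - 3 = j + 3 by ring,
      show (j : ℝ) + 4 - 3 = j + 1 by ring,
      show (j : ℝ) + 5 - 2 = j + 3 by ring, show (j : ℝ) + 4 + 1 = j + 5 by ring,
      show (j : ℝ) + 5 + 1 = j + 6 by ring,
      show (j : ℝ) + 3 + 1 = j + 4 by ring]
    field_simp
    ring
  · have e6 : ¬ Even (j + 6) := by grind
    have e5 : Even (j + 5) := by grind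
    have e4 : ¬ Even (j + 4) := by grind
    have e3 : Even (j + 3) := by grind
    simp only [if_neg e6, if_pos e5, if_neg e4, if_pos e3,
      (Nat.not_even_iff_odd.mp e4).neg_one_pow, (Nat.not_even_iff_odd.mp e6).neg_one_pow,
      e5.neg_one_pow]
    rw [show (j : ℝ) + 5 - 1 = j + 4 by ring, show (j : ℝ) + 4 - 2 = j + 2 by ring,
      show (j : ℝ) + 6 - 2 = j + 4 by ring, show (j : ℝ) + 5 - 3 = j + 2 by ring,
      show (j : ℝ) + 3 - 1 = j + 2 by ring, show (j : ℝ) + 4 + 1 = j + 5 by ring,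
      show (j : ℝ) + 5 + 1 = j + 6 by ring,
      show (j : ℝ) + 3 + 1 = j + 4 by ring]
    field_simp
    ring

lemma vals : H 2 = 3 / 2 ∧ H 3 = 11 / 6 ∧ H 4 = 25 / 12 ∧ H 5 = 137 / 60
    ∧ Halt 2 = -1 / 2 ∧ Halt 3 = -5 / 6 ∧ Halt 4 = -7 / 12 ∧ Halt 5 = -47 / 60
    ∧ As 3 = 2 ∧ As 4 = 35 / 12 ∧ As 5 = 15 / 4
    ∧ Bs 3 = -2 / 3 ∧ Bs 4 = - 7 / 8 ∧ Bs 5 = -119 / 120 := by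
  have h1 : H 1 = 1 := by simp [H]
  have g1 : Halt 1 = -1 := by simp [Halt]
  have h2 : H 2 = 3 / 2 := by rw [H_succ 1, h1]; norm_num
  have h3 : H 3 = 11 / 6 := by rw [H_succ 2, h2]; norm_num
  have h4 : H 4 = 25 / 12 := by rw [H_succ 3, h3]; norm_num
  have h5 : H 5 = 137 / 60 := by rw [H_succ 4, h4]; norm_num
  have g2 : Halt 2 = -1 / 2 := by rw [Halt_succ 1, g1]; norm_num
  have g3 : Halt 3 = -5 / 6 := by rw [Halt_succ 2, g2]; norm_num
  have g4 : Halt 4 = -7 / 12 := by rw [Halt_succ 3, g3]; norm_num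
  have g5 : Halt 5 = -47 / 60 := by rw [Halt_succ 4, g4]; norm_num
  have a0 : As 0 = 0 := by simp [As]
  have a1 : As 1 = 0 := by rw [As_succ 0, a0, H_zero]; norm_num
  have a2 : As 2 = 1 := by rw [As_succ 1, a1, h1]; norm_num
  have a3 : As 3 = 2 := by rw [As_succ 2, a2, h2]; norm_num
  have a4 : As 4 = 35 / 12 := by rw [As_succ 3, a3, h3]; norm_num
  have a5 : As 5 = 15 / 4 := by rw [As_succ 4, a4, h4]; norm_num
  have b1 : Bs 1 = 0 := by simp [Bs]
  have b2 : Bs 2 = -1 / 2 := by rw [Bs_succ 1 le_rfl, b1, g1]; norm_num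
  have b3 : Bs 3 = -2 / 3 := by rw [Bs_succ 2 (by norm_num), b2, g2]; norm_num
  have b4 : Bs 4 = -7 / 8 := by rw [Bs_succ 3 (by norm_num), b3, g3]; norm_num
  have b5 : Bs 5 = -119 / 120 := by rw [Bs_succ 4 (by norm_num), b4, g4]; norm_num
  exact ⟨h2, h3, h4, h5, g2, g3, g4, g5, a3, a4, a5, b3, b4, b5⟩

lemma cl_vals : Pcl 2 = 1 ∧ Pcl 3 = 8 / 3 ∧ Pcl 4 = 17 / 4 ∧ Pcl 5 = 349 / 60
    ∧ Dcl 3 = 8 / 3 ∧ Dcl 4 = 53 / 12 ∧ Fcl 4 = 55 / 12 ∧ Fcl 5 = 133 / 20 := by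
  obtain ⟨h2, h3, h4, h5, g2, g3, g4, g5, a3, a4, a5, b3, b4, b5⟩ := vals
  have e2 : Even 2 := by decide
  have e3 : ¬ Even 3 := by decide
  have e4 : Even 4 := by decide
  have e5 : ¬ Even 5 := by decide
  refine ⟨?_, ?_, ?_, ?_, ?_, ?_, ?_, ?_⟩
  · rw [Pcl, if_pos e2, h2, g2]; norm_num
  · rw [Pcl, if_neg e3, h3, g3]; norm_num
  · rw [Pcl, if_pos e4, h4, g4]; norm_num
  · rw [Pcl, if_neg e5, h5, g5]; norm_num
  · rw [Dcl, if_neg e3, h3, g3, a3, b3]; norm_num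
  · rw [Dcl, if_pos e4, h4, g4, a4, b4]; norm_num
  · rw [Fcl, if_pos e4, h4, g4, a4, b4, show 4 - 1 = 3 from rfl, h3, g3]; norm_num
  · rw [Fcl, if_neg e5, h5, g5, a5, b5, show 5 - 1 = 4 from rfl, h4, g4]; norm_num

lemma D_closed (P : ℕ → ℝ) (hP : IsGF P countGF) (j : ℕ) :
    qsCost P (j + 3) 1 = Dcl (j + 3) ∧ qsCost P (j + 4) 1 = Dcl (j + 4) := by
  have hp := count_Pcl P hP
  induction j with
  | zero =>
    obtain ⟨p2, p3, p4, p5, d3, d4, f4, f5⟩ := cl_vals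
    have z0 := qsCost_zero P 0 1 (by norm_num)
    have z1 := qsCost_zero P 1 1 (by norm_num)
    have r2 := rec_one P 2 le_rfl
    have r3 := rec_one P 3 (by norm_num)
    have r4 := rec_one P 4 (by norm_num)
    rw [hp 2 le_rfl, p2] at r2
    rw [hp 3 (by norm_num), p3] at r3
    rw [hp 4 (by norm_num), p4] at r4
    simp only [Nat.reduceSub, Finset.sum_range_succ, Finset.sum_range_zero] at r2 r3 r4
    push_cast at r2 r3 r4
    simp only [z0, z1] at r2 r3 r4
    simp only [zero_add]
    rw [d3, d4]
    constructor <;> linarith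
  | succ j ih =>
    refine ⟨ih.2, ?_⟩
    have h := rec_diff P (fun n => qsCost P n 1) (fun _ => 0) (rec_one P) (j + 1)
    have h' := Dcl_step j
    simp only [Nat.add_assoc, Nat.reduceAdd] at h ⊢
    rw [ih.1, ih.2, hp (j + 3) (by omega), hp (j + 4) (by omega), hp (j + 5) (by omega)] at h
    push_cast at h
    have hne : ((j : ℝ) + 5) * (j + 4) / 2 ≠ 0 := by positivity
    apply mul_left_cancel₀ hne
    linear_combination h - h'

lemma F_closed (P : ℕ → ℝ) (hP : IsGF P countGF) (j : ℕ) :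
    qsCost P (j + 4) 2 = Fcl (j + 4) ∧ qsCost P (j + 5) 2 = Fcl (j + 5) := by
  have hp := count_Pcl P hP
  induction j with
  | zero =>
    obtain ⟨p2, p3, p4, p5, d3, d4, f4, f5⟩ := cl_vals
    have z0 := qsCost_zero P 0 1 (by norm_num)
    have z1 := qsCost_zero P 1 1 (by norm_num)
    have y0 := qsCost_zero P 0 2 (by norm_num)
    have y1 := qsCost_zero P 1 2 (by norm_num)
    have q2 := rec_one P 2 le_rfl
    have q3 := (D_closed P hP 0).1
    have r2 := rec_two P 2 le_rfl
    have r3 := rec_two P 3 (by norm_num)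
    have r4 := rec_two P 4 (by norm_num)
    have r5 := rec_two P 5 (by norm_num)
    rw [hp 2 le_rfl, p2] at r2 q2
    rw [hp 3 (by norm_num), p3] at r3
    rw [hp 4 (by norm_num), p4] at r4
    rw [hp 5 (by norm_num), p5] at r5
    simp only [zero_add] at q3
    rw [d3] at q3
    simp only [Nat.reduceSub, Finset.sum_range_succ, Finset.sum_range_zero] at r2 r3 r4 r5 q2
    push_cast at r2 r3 r4 r5 q2
    simp only [z0, z1, y0, y1] at r2 r3 r4 r5 q2
    simp only [zero_add]
    rw [f4, f5]
    constructor <;> linarith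
  | succ j ih =>
    refine ⟨ih.2, ?_⟩
    have h := rec_diff P (fun n => qsCost P n 2) (fun n => qsCost P n 1) (rec_two P) (j + 2)
    have h' := Fcl_step j
    have hd := D_closed P hP j
    simp only [Nat.add_assoc, Nat.reduceAdd] at h ⊢
    rw [ih.1, ih.2, hd.1, hd.2, hp (j + 4) (by omega), hp (j + 5) (by omega),
      hp (j + 6) (by omega)] at h
    push_cast at h
    have hne : ((j : ℝ) + 6) * (j + 5) / 2 ≠ 0 := by positivity
    apply mul_left_cancel₀ hne
    linear_combination h - h'

/-- Exact cost of selecting the second smallest (equivalently,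
second largest) element with the strategy "Count", for all `n ≥ 4`. -/
theorem count_second_smallest_exact (Pct : ℕ → ℝ)
    (hPct : ∀ z : ℝ, |z| < 1 → HasSum (fun n : ℕ => Pct n * z ^ n) (countGF z))
    (n : ℕ) (hn : 4 ≤ n) :
    qsCost Pct n 2 = qsCost Pct n ((n : ℤ) - 1) ∧
    qsCost Pct n 2 =
      9 / 4 * (n : ℝ)
      + 1 / 12 * ∑ k ∈ Finset.Icc 1 (n - 1), H k / ((n : ℝ) - (k : ℝ))
      - 1 / 6 * ∑ k ∈ Finset.Icc 2 n, Halt (k - 1) / (k : ℝ)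
      - 8 / 9 * H n
      - 1 / 9 * Halt n
      - 755 / 216
      - 1 / 12 * ∑ k ∈ Finset.Icc 1 (n - 1), 1 / ((k : ℝ) * ((n : ℝ) - (k : ℝ)))
      + 1 / 6 * Halt (n - 1) / (n : ℝ)
      - (if Even n then 1 / (144 * ((n : ℝ) - 3)) else 0)
      - (if Odd n then 1 / (144 * ((n : ℝ) - 2)) else 0)
      + (if Even n then 5 / (144 * ((n : ℝ) - 1)) else 0)
      + (if Even n then 7 / (3 * (n : ℝ)) else 0)
      + (if Odd n then 325 / (144 * (n : ℝ)) else 0) := by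
  refine ⟨(qs_symm Pct n hn).symm, ?_⟩
  obtain ⟨j, rfl⟩ := Nat.exists_eq_add_of_le' hn
  rw [(F_closed Pct hPct j).1, As_eq (j + 4), ← Bs, Fcl]
  have hS := S_eq' (j + 3)
  rw [show j + 4 - 1 = j + 3 by omega, show j + 3 + 1 = j + 4 from rfl] at *
  rw [hS, show ((j + 3 : ℕ) : ℝ) + 1 = ((j + 4 : ℕ) : ℝ) by push_cast; ring]
  by_cases he : Even (j + 4)
  · have ho : ¬ Odd (j + 4) := Nat.not_odd_iff_even.mpr he
    simp only [if_pos he, if_neg ho]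
    ring
  · have ho : Odd (j + 4) := Nat.not_even_iff_odd.mp he
    simp only [if_neg he, if_pos ho]
    ring
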